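/- For sufficiently large ρ the following holds: if V is a lattice r-subspace, ξ ∈ Ξ(V), ν ∈ V^⊥, and ξ + ν ∈ Ξ(V), then N(ξ) = N(ξ + ν). Consequently, for ξ ∈ Ξ(V) the set N(ξ) depends only on the projection ξ_V. -/

import Mathlib

noncomputable section

open Set Submodule Module MeasureTheory Relation
open scoped RealInnerProductSpace

variable {d : ℕ}

/-- The lattice Γ generated over ℤ by the basis `B` of ℝ^d. -/
def latticeOf (B : Basis (Fin d) ℝ (EuclideanSpace ℝ (Fin d))) :
    Submodule ℤ (EuclideanSpace ℝ (Fin d)) :=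
  Submodule.span ℤ (Set.range B)

/-- The determinant d(Γ) of the lattice generated by `B`. -/
def latDet (B : Basis (Fin d) ℝ (EuclideanSpace ℝ (Fin d))) : ℝ :=
  |(EuclideanSpace.basisFun (Fin d) ℝ).toBasis.det (fun i => B i)|

/-- The dual lattice Γ† = {θ : θ·g ∈ 2πℤ for all g ∈ Γ}. -/
def dualLattice (B : Basis (Fin d) ℝ (EuclideanSpace ℝ (Fin d))) :
    Set (EuclideanSpace ℝ (Fin d)) :=
  {θ | ∀ g ∈ latticeOf B, ∃ k : ℤ, ⟪θ, g⟫ = 2 * Real.pi * k}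

/-- Θ_r : nonzero dual lattice vectors of norm at most r. -/
def Theta (B : Basis (Fin d) ℝ (EuclideanSpace ℝ (Fin d))) (r : ℝ) :
    Set (EuclideanSpace ℝ (Fin d)) :=
  {θ | θ ∈ dualLattice B ∧ θ ≠ 0 ∧ ‖θ‖ ≤ r}

/-- Θ_r⁰ : dual lattice vectors of norm at most r (including 0). -/
def Theta0 (B : Basis (Fin d) ℝ (EuclideanSpace ℝ (Fin d))) (r : ℝ) :
    Set (EuclideanSpace ℝ (Fin d)) :=
  {θ | θ ∈ dualLattice B ∧ ‖θ‖ ≤ r}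

/-- A lattice r-subspace: a subspace spanned by dual lattice vectors from Θ_r⁰. -/
def IsLatticeSubspace (B : Basis (Fin d) ℝ (EuclideanSpace ℝ (Fin d))) (r : ℝ)
    (V : Submodule ℝ (EuclideanSpace ℝ (Fin d))) : Prop :=
  ∃ S : Set (EuclideanSpace ℝ (Fin d)), S ⊆ Theta0 B r ∧ V = Submodule.span ℝ S

/-- Orthogonal projection ξ_V onto a subspace, viewed in the ambient space. -/
def projV (V : Submodule ℝ (EuclideanSpace ℝ (Fin d))) (ξ : EuclideanSpace ℝ (Fin d)) :
    EuclideanSpace ℝ (Fin d) :=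
  (orthogonalProjection V ξ : EuclideanSpace ℝ (Fin d))

/-- ω_n: the volume of the unit ball in ℝ^n. -/
def unitBallVol (n : ℕ) : ℝ :=
  (MeasureTheory.volume (Metric.ball (0 : EuclideanSpace ℝ (Fin n)) 1)).toReal

/-- The resonant layer Λ(θ) (= ℝ^d when θ = 0). -/
def layer (ρ a : ℝ) (θ : EuclideanSpace ℝ (Fin d)) : Set (EuclideanSpace ℝ (Fin d)) :=
  {ξ | θ = 0 ∨ |⟪ξ, θ⟫| < ρ ^ a * ‖θ‖}

/-- Υ_θ(ξ): the points θ-resonant congruent to ξ. -/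
def upsTheta (ρ a : ℝ) (θ ξ : EuclideanSpace ℝ (Fin d)) : Set (EuclideanSpace ℝ (Fin d)) :=
  {η | ξ ∈ layer ρ a θ ∧ η ∈ layer ρ a θ ∧ ∃ l : ℤ, ξ - η = (l : ℝ) • θ}

/-- One step of resonant congruence (with some θ ∈ Θ_r⁰). -/
def resStep (B : Basis (Fin d) ℝ (EuclideanSpace ℝ (Fin d))) (ρ a r : ℝ)
    (ξ η : EuclideanSpace ℝ (Fin d)) : Prop :=
  ∃ θ ∈ Theta0 B r, η ∈ upsTheta ρ a θ ξ

/-- Υ(ξ): all points resonant congruent to ξ. -/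
def Ups (B : Basis (Fin d) ℝ (EuclideanSpace ℝ (Fin d))) (ρ a r : ℝ)
    (ξ : EuclideanSpace ℝ (Fin d)) : Set (EuclideanSpace ℝ (Fin d)) :=
  {η | Relation.ReflTransGen (resStep B ρ a r) ξ η}

/-- N(ξ) = Υ(ξ) − ξ. -/
def resN (B : Basis (Fin d) ℝ (EuclideanSpace ℝ (Fin d))) (ρ a r : ℝ)
    (ξ : EuclideanSpace ℝ (Fin d)) : Set (EuclideanSpace ℝ (Fin d)) :=
  {m | ξ + m ∈ Ups B ρ a r ξ}

/-- Ξ₁(V) = {ξ : |ξ_V| < ρ^{α_n}}, n = dim V. -/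
def Xi1 (ρ : ℝ) (α : ℕ → ℝ) (V : Submodule ℝ (EuclideanSpace ℝ (Fin d))) :
    Set (EuclideanSpace ℝ (Fin d)) :=
  {ξ | ‖projV V ξ‖ < ρ ^ α (Module.finrank ℝ V)}

/-- Ξ₂(V) = ∪_{ξ ∈ Ξ₁(V)} Υ(ξ). -/
def Xi2 (B : Basis (Fin d) ℝ (EuclideanSpace ℝ (Fin d))) (ρ r : ℝ) (α : ℕ → ℝ)
    (V : Submodule ℝ (EuclideanSpace ℝ (Fin d))) : Set (EuclideanSpace ℝ (Fin d)) :=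
  {η | ∃ ξ ∈ Xi1 ρ α V, η ∈ Ups B ρ (α 1) r ξ}

/-- Ξ(V): Ξ₂(V) minus the Ξ₂(W) for all lattice r-subspaces W of larger dimension. -/
def Xi (B : Basis (Fin d) ℝ (EuclideanSpace ℝ (Fin d))) (ρ r : ℝ) (α : ℕ → ℝ)
    (V : Submodule ℝ (EuclideanSpace ℝ (Fin d))) : Set (EuclideanSpace ℝ (Fin d)) :=
  Xi2 B ρ r α V \
    ⋃ W ∈ {W : Submodule ℝ (EuclideanSpace ℝ (Fin d)) |
        IsLatticeSubspace B r W ∧ Module.finrank ℝ V < Module.finrank ℝ W},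
      Xi2 B ρ r α W

/-- The standing conditions on the parameters ρ ≥ 1, r, κ > 0 and the exponents α_j:
0 = α₀, α_{n+1} > α_n + 2κd², α_d < 1, r ≤ ρ^κ, and r ≥ r₀ (i.e. Θ_r⁰ spans ℝ^d). -/
def GoodParams (B : Basis (Fin d) ℝ (EuclideanSpace ℝ (Fin d))) (ρ r κ : ℝ)
    (α : ℕ → ℝ) : Prop :=
  1 ≤ ρ ∧ 0 < κ ∧ α 0 = 0 ∧ (∀ n < d, α n + 2 * κ * (d : ℝ) ^ 2 < α (n + 1)) ∧
    α d < 1 ∧ r ≤ ρ ^ κ ∧ Submodule.span ℝ (Theta0 B r) = ⊤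

/-!
Chains of resonant congruences whose directions span an `n`-dimensional space move a point by at
most `2 (4 (1 + L))ⁿ ρ^a`, where `1 / L` is a lower bound for the sines of the angles between the
lattice `r`-subspaces and the vectors of `Θ_r` outside them. Determinants of dual lattice vectors
with respect to a basis of `Γ†` are integers, and this allows `L = O(r^d)`.

Suppose that a chain starting at `ζ ∈ Ξ₁(V)` cannot be replaced by one with directions in `V`.
After moving along `V` only, and hence not far, it then enters the layer of some `θ ∉ V`. So the
projection of `ζ` onto `V + ℝθ` is small, and the gaps between the exponents give
`ζ ∈ Ξ₁(V + ℝθ)`. This is excluded if `ζ` is congruent to a point of `Ξ(V)`. Hence the chains from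
a point of `Ξ(V)` may be taken to have directions in `V`, and these chains are invariant under
translations by `Vᗮ`.
-/

section Projection

variable {E : Type*} [NormedAddCommGroup E] [InnerProductSpace ℝ E]

theorem norm_starProjection_span_singleton (v z : E) :
    ‖(span ℝ {v}).starProjection z‖ = |⟪z, v⟫| / ‖v‖ := by
  rcases eq_or_ne v 0 with rfl | hv
  · simp
  · have hv' : ‖v‖ ≠ 0 := norm_ne_zero_iff.2 hv
    rw [starProjection_singleton, norm_smul, real_inner_comm, norm_div, Real.norm_eq_abs]
    simp only [RCLike.ofReal_real_eq_id, id_eq, norm_pow, norm_norm]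
    field_simp

theorem starProjection_eq_add_of_isOrtho_of_sup_eq {S U W : Submodule ℝ E}
    [S.HasOrthogonalProjection] [U.HasOrthogonalProjection] [W.HasOrthogonalProjection]
    (h : U ⟂ W) (hS : U ⊔ W = S) (z : E) :
    S.starProjection z = U.starProjection z + W.starProjection z := by
  have hU : U.starProjection z ∈ U := starProjection_apply_mem U z
  have hW : W.starProjection z ∈ W := starProjection_apply_mem W z
  subst hS
  refine eq_starProjection_of_mem_orthogonal (add_mem_sup hU hW) ?_
  rw [← inf_orthogonal]
  constructor
  · rw [← sub_sub]
    exact sub_mem (sub_starProjection_mem_orthogonal z) (h.symm hW)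
  · rw [← sub_sub, sub_right_comm]
    exact sub_mem (sub_starProjection_mem_orthogonal z) (h hU)

theorem norm_sub_le_add_norm_starProjection {U : Submodule ℝ E} [U.HasOrthogonalProjection]
    {x y : E} (h : x - y ∈ U) :
    ‖x - y‖ ≤ ‖U.starProjection x‖ + ‖U.starProjection y‖ := by
  rw [← starProjection_eq_self_iff.2 h, map_sub]
  exact norm_sub_le _ _

theorem sup_span_singleton_sub_starProjection (U : Submodule ℝ E) [U.HasOrthogonalProjection]
    (θ : E) : U ⊔ span ℝ {θ - U.starProjection θ} = U ⊔ span ℝ {θ} := by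
  have hp : U.starProjection θ ∈ U := starProjection_apply_mem U θ
  apply le_antisymm <;> refine sup_le le_sup_left ((span_singleton_le_iff_mem _ _).2 ?_)
  · exact sub_mem (mem_sup_right (mem_span_singleton_self θ)) (mem_sup_left hp)
  · simpa using add_mem (mem_sup_right (mem_span_singleton_self (θ - U.starProjection θ)))
      (mem_sup_left hp)

theorem norm_starProjection_sup_span_singleton_le {U : Submodule ℝ E}
    [U.HasOrthogonalProjection] {θ : E} [(U ⊔ span ℝ {θ}).HasOrthogonalProjection] {L A : ℝ}
    (hθU : θ ∉ U) (hL : ‖θ‖ ≤ L * ‖θ - U.starProjection θ‖) {z : E} (hz : |⟪z, θ⟫| ≤ A * ‖θ‖) :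
    ‖(U ⊔ span ℝ {θ}).starProjection z‖ ≤ (1 + L) * (‖U.starProjection z‖ + A) := by
  set w := θ - U.starProjection θ with hw
  set M := ‖U.starProjection z‖
  have hwU : U ⟂ span ℝ {w} := by
    rw [isOrtho_iff_le, le_orthogonal_iff_le_orthogonal, span_singleton_le_iff_mem]
    exact sub_starProjection_mem_orthogonal θ
  have hθ : 0 < ‖θ‖ := norm_pos_iff.2 fun h ↦ hθU (h ▸ zero_mem U)
  have hw_pos : 0 < ‖w‖ := norm_pos_iff.2 fun h ↦
    hθU (sub_eq_zero.1 h ▸ starProjection_apply_mem U θ)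
  have hA : 0 ≤ A := nonneg_of_mul_nonneg_left ((abs_nonneg _).trans hz) hθ
  have hzw : |⟪z, w⟫| ≤ (M + A) * ‖θ‖ := by
    calc |⟪z, w⟫| = |⟪z, θ⟫ - ⟪U.starProjection z, θ⟫| := by
          rw [hw, inner_sub_right, inner_starProjection_left_eq_right]
      _ ≤ |⟪z, θ⟫| + |⟪U.starProjection z, θ⟫| := abs_sub _ _
      _ ≤ A * ‖θ‖ + M * ‖θ‖ := add_le_add hz (abs_real_inner_le_norm _ _)
      _ = (M + A) * ‖θ‖ := by ring
  have hproj : ‖(span ℝ {w}).starProjection z‖ ≤ L * (M + A) := by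
    rw [norm_starProjection_span_singleton, div_le_iff₀ hw_pos]
    calc |⟪z, w⟫| ≤ (M + A) * ‖θ‖ := hzw
      _ ≤ (M + A) * (L * ‖w‖) := by gcongr
      _ = L * (M + A) * ‖w‖ := by ring
  have hsup := starProjection_eq_add_of_isOrtho_of_sup_eq hwU
    (sup_span_singleton_sub_starProjection U θ) z
  calc ‖(U ⊔ span ℝ {θ}).starProjection z‖ ≤ M + L * (M + A) := by
        rw [hsup]
        exact (norm_add_le _ _).trans (by gcongr)
    _ ≤ (1 + L) * (M + A) := by linarith

end Projection

section AngleBound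

variable {E : Type*} [NormedAddCommGroup E] [InnerProductSpace ℝ E]

/-- `U` is spanned by vectors of `Θ`. For `Θ = Theta0 B r` these are the lattice `r`-subspaces. -/
def IsSpannedBy (Θ : Set E) (U : Submodule ℝ E) : Prop :=
  ∃ S ⊆ Θ, U = span ℝ S

namespace IsSpannedBy

variable {Θ Θ' : Set E} {U : Submodule ℝ E}

theorem bot : IsSpannedBy Θ (⊥ : Submodule ℝ E) :=
  ⟨∅, empty_subset Θ, span_empty.symm⟩

theorem mono (h : Θ ⊆ Θ') : IsSpannedBy Θ U → IsSpannedBy Θ' U :=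
  fun ⟨S, hS, hU⟩ ↦ ⟨S, hS.trans h, hU⟩

theorem le_span (hU : IsSpannedBy Θ U) : U ≤ span ℝ Θ := by
  obtain ⟨S, hS, rfl⟩ := hU
  exact span_mono hS

theorem sup_span_singleton (hU : IsSpannedBy Θ U) {θ : E} (hθ : θ ∈ Θ) :
    IsSpannedBy Θ (U ⊔ span ℝ {θ}) := by
  obtain ⟨S, hS, rfl⟩ := hU
  exact ⟨S ∪ {θ}, union_subset hS (singleton_subset_iff.2 hθ), (span_union S {θ}).symm⟩

theorem span_inter (hU : IsSpannedBy Θ U) : span ℝ (Θ ∩ U) = U := by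
  obtain ⟨S, hS, rfl⟩ := hU
  exact le_antisymm (span_le.2 inter_subset_right) (span_mono (subset_inter hS subset_span))

end IsSpannedBy

/-- `1 / L` is a lower bound for the sine of the angle between a subspace spanned by vectors of `Θ`
and a vector of `Θ` outside that subspace. -/
structure IsAngleBound [FiniteDimensional ℝ E] (Θ : Set E) (L : ℝ) : Prop where
  nonneg : 0 ≤ L
  norm_le : ∀ U : Submodule ℝ E, IsSpannedBy Θ U → ∀ θ ∈ Θ, θ ∉ U →
    ‖θ‖ ≤ L * ‖θ - U.starProjection θ‖

theorem IsAngleBound.mono [FiniteDimensional ℝ E] {Θ Θ' : Set E} {L : ℝ} (h : IsAngleBound Θ' L)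
    (hΘ : Θ ⊆ Θ') : IsAngleBound Θ L :=
  ⟨h.nonneg, fun U hU θ hθ ↦ h.norm_le U (hU.mono hΘ) θ (hΘ hθ)⟩

end AngleBound

section Determinant

theorem map_update_sub_of_mem_span {R M N ι : Type*} [CommRing R] [AddCommGroup M]
    [Module R M] [AddCommGroup N] [Module R N] [DecidableEq ι] (f : M [⋀^ι]→ₗ[R] N) (v : ι → M)
    (i : ι) {p : M} (hp : p ∈ span R (v '' {i}ᶜ)) : f (Function.update v i (v i - p)) = f v := by
  have hzero : f (Function.update v i p) = 0 := by
    induction hp using span_induction with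
    | mem x hx =>
      obtain ⟨j, hj, rfl⟩ := hx
      exact f.map_update_self v (Ne.symm hj)
    | zero => exact f.map_update_zero v i
    | add x y _ _ hx hy => rw [f.map_update_add, hx, hy, add_zero]
    | smul c x _ hx => rw [f.map_update_smul, hx, smul_zero]
  rw [f.map_update_sub, hzero, sub_zero, Function.update_eq_self]

theorem exists_basis_of_linearIndepOn {K V ι : Type*} [Field K] [AddCommGroup V] [Module K V]
    (b : Basis ι K V) {s : Set V} (hs : LinearIndepOn K id s) :
    ∃ v : Basis ι K V, s ⊆ range v ∧ range v ⊆ s ∪ range b := by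
  have hsub : s ⊆ s ∪ range b := subset_union_left
  have htop : span K (s ∪ range b) = ⊤ := by
    rw [span_union, b.span_eq, sup_top_eq]
  let v := Basis.extendLe hs hsub htop.ge
  have hrange : range (v.reindex (v.indexEquiv b)) = hs.extend hsub := by
    rw [v.range_reindex, Basis.range_extendLe]
  exact ⟨v.reindex (v.indexEquiv b), (hs.subset_extend hsub).trans_eq hrange.symm,
    hrange.trans_subset (hs.extend_subset hsub)⟩

theorem exists_basis_of_notMem_span {K V ι : Type*} [Field K] [AddCommGroup V] [Module K V]
    (b : Basis ι K V) {S : Set V} {θ : V} (hθ : θ ∉ span K S) :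
    ∃ (v : Basis ι K V) (i : ι), v i = θ ∧ range v ⊆ insert θ S ∪ range b ∧
      span K S ≤ span K (v '' {i}ᶜ) := by
  obtain ⟨s, hsS, hspan, hs⟩ := exists_linearIndependent K S
  obtain ⟨v, hsv, hvs⟩ := exists_basis_of_linearIndepOn b
    (LinearIndepOn.id_insert (x := θ) hs (by rwa [hspan]))
  obtain ⟨i, hi⟩ := hsv (mem_insert θ s)
  have hs_image : s ⊆ v '' {i}ᶜ := by
    intro x hx
    obtain ⟨j, rfl⟩ := hsv (mem_insert_of_mem θ hx)
    refine ⟨j, ?_, rfl⟩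
    rintro rfl
    exact hθ (hspan ▸ subset_span (hi ▸ hx))
  exact ⟨v, i, hi, hvs.trans (union_subset_union_left _ (insert_subset_insert hsS)),
    hspan ▸ span_mono hs_image⟩

theorem one_le_abs_det_of_mem_span_int {ι E : Type*} [Fintype ι] [DecidableEq ι] [AddCommGroup E]
    [Module ℝ E] (b : Basis ι ℝ E) {v : ι → E} (hv : ∀ i, v i ∈ span ℤ (range b))
    (hli : LinearIndependent ℝ v) : 1 ≤ |b.det v| := by
  have : FiniteDimensional ℝ E := b.finiteDimensional_of_finite
  choose k hk using fun j i ↦ (b.mem_span_iff_repr_mem ℤ (v j)).1 (hv j) i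
  have hint : b.det v = ((Matrix.of fun i j ↦ k j i).det : ℤ) := by
    rw [b.det_apply, Int.cast_det]
    congr 1
    ext i j
    exact (hk j i).symm
  have hne : b.det v ≠ 0 :=
    (b.is_basis_iff_det.1 ⟨hli,
      hli.span_eq_top_of_card_eq_finrank' (finrank_eq_card_basis b).symm⟩).ne_zero
  rw [hint] at hne ⊢
  exact_mod_cast Int.one_le_abs (by exact_mod_cast hne)

variable {ι E : Type*} [Fintype ι] [NormedAddCommGroup E]

theorem exists_abs_det_le [DecidableEq ι] [NormedSpace ℝ E] (b : Basis ι ℝ E) :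
    ∃ C ≥ 0, ∀ v : ι → E, |b.det v| ≤ C * ∏ i, ‖v i‖ := by
  have : FiniteDimensional ℝ E := b.finiteDimensional_of_finite
  have hcont : Continuous b.det := by
    have hcoord (i : ι) : Continuous (b.coord i) := (b.coord i).continuous_of_finiteDimensional
    exact Continuous.matrix_det <| continuous_matrix fun i j ↦
      (hcoord i).comp (continuous_apply j)
  obtain ⟨C, hC, h⟩ := b.det.exists_bound_of_continuous hcont
  exact ⟨C, hC.le, h⟩

theorem one_le_mul_norm_sub [DecidableEq ι] [NormedSpace ℝ E] (b : Basis ι ℝ E) {C R : ℝ}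
    (hC : 0 ≤ C) (hdet : ∀ v : ι → E, |b.det v| ≤ C * ∏ i, ‖v i‖) {v : ι → E}
    (hv : ∀ i, v i ∈ span ℤ (range b)) (hvR : ∀ i, ‖v i‖ ≤ R) (hli : LinearIndependent ℝ v)
    (i : ι) {p : E} (hp : p ∈ span ℝ (v '' {i}ᶜ)) :
    1 ≤ C * (‖v i - p‖ * R ^ (Fintype.card ι - 1)) := by
  calc 1 ≤ |b.det v| := one_le_abs_det_of_mem_span_int b hv hli
    _ = |b.det (Function.update v i (v i - p))| := by
      rw [map_update_sub_of_mem_span b.det v i hp]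
    _ ≤ C * ∏ j, ‖Function.update v i (v i - p) j‖ := hdet _
    _ = C * (‖v i - p‖ * ∏ j ∈ {i}ᶜ, ‖v j‖) := by
      rw [Fintype.prod_eq_mul_prod_compl i, Function.update_self]
      congr! 3 with j hj
      rw [Function.update_of_ne (by simpa using hj)]
    _ ≤ C * (‖v i - p‖ * ∏ _j ∈ ({i}ᶜ : Finset ι), R) := by
      gcongr with j
      exact hvR j
    _ = C * (‖v i - p‖ * R ^ (Fintype.card ι - 1)) := by
      rw [Finset.prod_const, Finset.card_compl, Finset.card_singleton]

theorem exists_isAngleBound_span_int [InnerProductSpace ℝ E] [FiniteDimensional ℝ E]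
    (b : Basis ι ℝ E) :
    ∃ C ≥ 0, ∀ R ≥ 1,
      IsAngleBound {x : E | x ∈ span ℤ (range b) ∧ ‖x‖ ≤ R} (C * R ^ Fintype.card ι) := by
  classical
  obtain ⟨C, hC, hdet⟩ := exists_abs_det_le b
  set M := 1 + ∑ i, ‖b i‖
  have hM : 1 ≤ M := le_add_of_nonneg_right (by positivity)
  have hbM (i : ι) : ‖b i‖ ≤ M :=
    (Finset.single_le_sum (fun j _ ↦ norm_nonneg (b j)) (Finset.mem_univ i)).trans
      (le_add_of_nonneg_left zero_le_one)
  refine ⟨C * M ^ (Fintype.card ι - 1), by positivity, fun R hR ↦ ⟨by positivity, ?_⟩⟩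
  rintro _ ⟨S, hS, rfl⟩ θ hθ hθS
  set p := (span ℝ S).starProjection θ
  obtain ⟨v, i, hi, hv, hspan⟩ := exists_basis_of_notMem_span b hθS
  have hv_mem (j : ι) : v j ∈ span ℤ (range b) ∧ ‖v j‖ ≤ M * R := by
    rcases hv (mem_range_self j) with hj | ⟨k, hk⟩
    · obtain ⟨hj_mem, hj_norm⟩ := insert_subset hθ hS hj
      exact ⟨hj_mem, hj_norm.trans (le_mul_of_one_le_left (by positivity) hM)⟩
    · rw [← hk]
      exact ⟨subset_span (mem_range_self k),
        (hbM k).trans (le_mul_of_one_le_right (by positivity) hR)⟩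
  have hone : 1 ≤ C * (‖θ - p‖ * (M * R) ^ (Fintype.card ι - 1)) :=
    hi ▸ one_le_mul_norm_sub b hC hdet (fun j ↦ (hv_mem j).1) (fun j ↦ (hv_mem j).2)
      v.linearIndependent i (hspan (starProjection_apply_mem _ θ))
  have hcard : Fintype.card ι ≠ 0 := (Fintype.card_pos_iff.2 ⟨i⟩).ne'
  calc ‖θ‖ ≤ R := hθ.2
    _ ≤ R * (C * (‖θ - p‖ * (M * R) ^ (Fintype.card ι - 1))) :=
        le_mul_of_one_le_right (by positivity) hone
    _ = C * M ^ (Fintype.card ι - 1) * R ^ Fintype.card ι * ‖θ - p‖ := by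
        rw [mul_pow, ← mul_pow_sub_one hcard R]
        ring

end Determinant

section DualLattice

theorem exists_basis_dualLattice_eq_span (B : Basis (Fin d) ℝ (EuclideanSpace ℝ (Fin d))) :
    ∃ b : Basis (Fin d) ℝ (EuclideanSpace ℝ (Fin d)), dualLattice B = span ℤ (range b) := by
  let F : LinearMap.BilinForm ℝ (EuclideanSpace ℝ (Fin d)) := (2 * Real.pi)⁻¹ • innerₗ _
  have hF (x y : EuclideanSpace ℝ (Fin d)) : F x y = (2 * Real.pi)⁻¹ * ⟪x, y⟫ := rfl
  have hF_nondeg : F.Nondegenerate :=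
    ⟨fun x hx ↦ by simpa [hF, Real.pi_ne_zero] using hx x,
      fun x hx ↦ by simpa [hF, Real.pi_ne_zero] using hx x⟩
  refine ⟨F.dualBasis hF_nondeg B, ?_⟩
  rw [← LinearMap.BilinForm.dualSubmodule_span_of_basis]
  ext θ
  refine forall₂_congr fun g _ ↦ ?_
  simp only [Submodule.mem_one, hF]
  refine exists_congr fun k ↦ ?_
  rw [eq_inv_mul_iff_mul_eq₀ (by positivity), eq_comm, algebraMap_int_eq, eq_intCast]

theorem exists_isAngleBound_Theta0 (B : Basis (Fin d) ℝ (EuclideanSpace ℝ (Fin d))) :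
    ∃ C ≥ 0, ∀ R ≥ 1, ∀ r ≤ R, IsAngleBound (Theta0 B r) (C * R ^ d) := by
  obtain ⟨b, hb⟩ := exists_basis_dualLattice_eq_span B
  obtain ⟨C, hC, hbound⟩ := exists_isAngleBound_span_int b
  refine ⟨C, hC, fun R hR r hr ↦ ?_⟩
  have hR_bound := hbound R hR
  rw [Fintype.card_fin] at hR_bound
  exact hR_bound.mono fun θ hθ ↦ ⟨hb.subset hθ.1, hθ.2.trans hr⟩

end DualLattice

section Chains

variable {ρ a L : ℝ} {Θ Θ' : Set (EuclideanSpace ℝ (Fin d))}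
  {U : Submodule ℝ (EuclideanSpace ℝ (Fin d))} {x y z w θ : EuclideanSpace ℝ (Fin d)}

theorem upsTheta_symm (h : y ∈ upsTheta ρ a θ x) : x ∈ upsTheta ρ a θ y := by
  obtain ⟨hx, hy, l, hl⟩ := h
  exact ⟨hy, hx, -l, by rw [← neg_sub, hl, Int.cast_neg, neg_smul]⟩

theorem abs_inner_le_of_mem_layer (h : x ∈ layer ρ a θ) :
    |⟪x, θ⟫| ≤ ρ ^ a * ‖θ‖ := by
  rcases h with rfl | h
  · simp
  · exact h.le

theorem norm_starProjection_sup_span_singleton_le_of_mem_layer {M : ℝ} (hΘ : IsAngleBound Θ L)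
    (hU : IsSpannedBy Θ U) (hθ : θ ∈ Θ) (hθU : θ ∉ U) (hw : w ∈ layer ρ a θ) (hM : ρ ^ a ≤ M)
    (hz : ‖U.starProjection z‖ ≤ M) (hzw : ‖z - w‖ ≤ 2 * M) :
    ‖(U ⊔ span ℝ {θ}).starProjection z‖ ≤ 4 * (1 + L) * M := by
  have hinner : |⟪z, θ⟫| ≤ 3 * M * ‖θ‖ := by
    calc |⟪z, θ⟫| = |⟪z - w, θ⟫ + ⟪w, θ⟫| := by rw [← inner_add_left, sub_add_cancel]
      _ ≤ |⟪z - w, θ⟫| + |⟪w, θ⟫| := abs_add_le _ _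
      _ ≤ ‖z - w‖ * ‖θ‖ + ρ ^ a * ‖θ‖ :=
        add_le_add (abs_real_inner_le_norm _ _) (abs_inner_le_of_mem_layer hw)
      _ ≤ 2 * M * ‖θ‖ + M * ‖θ‖ := by gcongr
      _ = 3 * M * ‖θ‖ := by ring
  have hL := hΘ.nonneg
  calc ‖(U ⊔ span ℝ {θ}).starProjection z‖ ≤ (1 + L) * (‖U.starProjection z‖ + 3 * M) :=
        norm_starProjection_sup_span_singleton_le hθU (hΘ.norm_le U hU θ hθ hθU) hinner
    _ ≤ (1 + L) * (M + 3 * M) := by gcongr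
    _ = 4 * (1 + L) * M := by ring

/-- Resonant congruence through chains whose directions belong to `Θ`. The paper's notion is the
case `Θ = Theta0 B r`; the smaller sets `Θ = Theta0 B r ∩ U` confine the chains to the
directions in `U`. -/
def ResCongr (ρ a : ℝ) (Θ : Set (EuclideanSpace ℝ (Fin d))) :
    EuclideanSpace ℝ (Fin d) → EuclideanSpace ℝ (Fin d) → Prop :=
  ReflTransGen fun ξ η ↦ ∃ θ ∈ Θ, η ∈ upsTheta ρ a θ ξ

namespace ResCongr

theorem symm (h : ResCongr ρ a Θ x y) : ResCongr ρ a Θ y x := by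
  induction h with
  | refl => exact .refl
  | tail _ hstep ih =>
    obtain ⟨θ, hθ, h⟩ := hstep
    exact .head ⟨θ, hθ, upsTheta_symm h⟩ ih

theorem mono (hΘ : Θ ⊆ Θ') (h : ResCongr ρ a Θ x y) : ResCongr ρ a Θ' x y :=
  ReflTransGen.mono (fun _ _ ⟨θ, hθ, hstep⟩ ↦ ⟨θ, hΘ hθ, hstep⟩) _ _ h

theorem sub_mem_span (h : ResCongr ρ a Θ x y) : x - y ∈ span ℝ Θ := by
  induction h with
  | refl => simp
  | @tail y z _ hstep ih =>
    obtain ⟨θ, hθ, _, _, l, hl⟩ := hstep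
    rw [← sub_add_sub_cancel x y z, hl]
    exact add_mem ih (smul_mem _ _ (subset_span hθ))

theorem add_right {ν : EuclideanSpace ℝ (Fin d)} (hν : ∀ θ ∈ Θ, ⟪ν, θ⟫ = 0)
    (h : ResCongr ρ a Θ x y) : ResCongr ρ a Θ (x + ν) (y + ν) := by
  refine ReflTransGen.lift (· + ν) ?_ x y h
  rintro ξ η ⟨θ, hθ, hξ, hη, l, hl⟩
  have hlayer (ζ : EuclideanSpace ℝ (Fin d)) : ζ + ν ∈ layer ρ a θ ↔ ζ ∈ layer ρ a θ := by
    simp only [layer, mem_ofPred_eq, inner_add_left, hν θ hθ, add_zero]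
  exact ⟨θ, hθ, (hlayer ξ).2 hξ, (hlayer η).2 hη, l, by rwa [add_sub_add_right_eq_sub]⟩

theorem exists_mem_layer_notMem (h : ResCongr ρ a Θ x z) (hU : ¬ResCongr ρ a (Θ ∩ U) x z) :
    ∃ y, ResCongr ρ a (Θ ∩ U) x y ∧ ∃ θ ∈ Θ, θ ∉ U ∧ y ∈ layer ρ a θ := by
  induction h with
  | refl => exact absurd .refl hU
  | @tail y z _ hstep ih =>
    by_cases hy : ResCongr ρ a (Θ ∩ U) x y
    · obtain ⟨θ, hθ, h⟩ := hstep
      exact ⟨y, hy, θ, hθ, fun hθU ↦ hU (hy.tail ⟨θ, ⟨hθ, hθU⟩, h⟩), h.1⟩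
    · exact ih hy

end ResCongr

/-- Among the spanned subspaces `U` on which the projection of `z` is small, a maximal one confines
all chains from `z`: a chain leaving `U` would make it possible to enlarge `U`. -/
theorem ResCongr.exists_isSpannedBy_forall_inter (hρ : 0 ≤ ρ) (hΘ : IsAngleBound Θ L)
    (hdiam : ∀ U, IsSpannedBy Θ U → U < span ℝ Θ → ∀ x y, ResCongr ρ a (Θ ∩ U) x y →
      ‖x - y‖ ≤ 2 * ((4 * (1 + L)) ^ finrank ℝ U * ρ ^ a))
    (z : EuclideanSpace ℝ (Fin d)) :
    ∃ U : Submodule ℝ (EuclideanSpace ℝ (Fin d)), IsSpannedBy Θ U ∧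
      ‖U.starProjection z‖ ≤ (4 * (1 + L)) ^ finrank ℝ U * ρ ^ a ∧
      ∀ y, ResCongr ρ a Θ z y → ResCongr ρ a (Θ ∩ U) z y := by
  set K := 4 * (1 + L)
  have hK : 1 ≤ K := by linarith [hΘ.nonneg]
  obtain ⟨U, hU⟩ := exists_maximal_of_wellFoundedGT
    (fun U ↦ IsSpannedBy Θ U ∧ ‖U.starProjection z‖ ≤ K ^ finrank ℝ U * ρ ^ a)
    ⟨⊥, IsSpannedBy.bot, by
      simp only [starProjection_bot, zero_apply, norm_zero]
      positivity⟩
  refine ⟨U, hU.prop.1, hU.prop.2, fun y hy ↦ by_contra fun hyU ↦ ?_⟩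
  obtain ⟨w, hzw, θ, hθ, hθU, hw⟩ := hy.exists_mem_layer_notMem hyU
  have hlt : U < span ℝ Θ :=
    hU.prop.1.le_span.lt_of_ne fun h ↦ hθU (h ▸ subset_span hθ)
  have hstep := norm_starProjection_sup_span_singleton_le_of_mem_layer hΘ hU.prop.1 hθ hθU hw
    (le_mul_of_one_le_left (by positivity) (one_le_pow₀ hK)) hU.prop.2
    (hdiam U hU.prop.1 hlt z w hzw)
  have hle : U ⊔ span ℝ {θ} ≤ U := hU.le_of_ge ⟨hU.prop.1.sup_span_singleton hθ, by
    rw [finrank_sup_span_singleton hθU, pow_succ']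
    linarith⟩ le_sup_left
  exact hθU (hle (mem_sup_right (mem_span_singleton_self θ)))

theorem ResCongr.norm_sub_le (hρ : 0 ≤ ρ) (hΘ : IsAngleBound Θ L) (h : ResCongr ρ a Θ x y) :
    ‖x - y‖ ≤ 2 * ((4 * (1 + L)) ^ finrank ℝ (span ℝ Θ) * ρ ^ a) := by
  induction hn : finrank ℝ (span ℝ Θ) using Nat.strong_induction_on generalizing Θ x y with
  | _ n ih =>
  have hK : 1 ≤ 4 * (1 + L) := by linarith [hΘ.nonneg]
  have hdiam (U) (hU : IsSpannedBy Θ U) (hlt : U < span ℝ Θ) (x y) (h : ResCongr ρ a (Θ ∩ U) x y) :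
      ‖x - y‖ ≤ 2 * ((4 * (1 + L)) ^ finrank ℝ U * ρ ^ a) :=
    ih _ (hn ▸ finrank_lt_finrank_of_lt hlt) (hΘ.mono inter_subset_left) h (by rw [hU.span_inter])
  have hproj_or (x y) (h : ResCongr ρ a Θ x y) :
      ‖x - y‖ ≤ 2 * ((4 * (1 + L)) ^ n * ρ ^ a) ∨
        ‖(span ℝ Θ).starProjection x‖ ≤ (4 * (1 + L)) ^ n * ρ ^ a := by
    obtain ⟨U, hU, hproj, hinter⟩ := exists_isSpannedBy_forall_inter hρ hΘ hdiam x
    rcases hU.le_span.lt_or_eq with hlt | rfl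
    · have hfinrank : finrank ℝ U ≤ n := hn ▸ finrank_mono hlt.le
      exact .inl ((hdiam U hU hlt x y (hinter y h)).trans (by gcongr))
    · exact .inr (hn ▸ hproj)
  rcases hproj_or x y h with hxy | hx
  · exact hxy
  rcases hproj_or y x h.symm with hyx | hy
  · rwa [norm_sub_rev]
  calc ‖x - y‖ ≤ ‖(span ℝ Θ).starProjection x‖ + ‖(span ℝ Θ).starProjection y‖ :=
        norm_sub_le_add_norm_starProjection h.sub_mem_span
    _ ≤ 2 * ((4 * (1 + L)) ^ n * ρ ^ a) := by linarith

end Chains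

section Xi

variable {B : Basis (Fin d) ℝ (EuclideanSpace ℝ (Fin d))} {ρ r L : ℝ} {α : ℕ → ℝ}
  {Θ : Set (EuclideanSpace ℝ (Fin d))} {V : Submodule ℝ (EuclideanSpace ℝ (Fin d))}
  {x x' y ζ θ : EuclideanSpace ℝ (Fin d)}

theorem rpow_one_le_rpow_of_gap (hρ : 0 ≤ ρ) (hL : 0 ≤ L)
    (hgap : ∀ n, 1 ≤ n → n < d → (4 * (1 + L)) ^ d * ρ ^ α n < ρ ^ α (n + 1)) {n : ℕ}
    (hn : 1 ≤ n) (hnd : n ≤ d) : ρ ^ α 1 ≤ ρ ^ α n := by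
  induction n, hn using Nat.le_induction with
  | base => exact le_rfl
  | succ n hn ih =>
    calc ρ ^ α 1 ≤ ρ ^ α n := ih (Nat.le_of_succ_le hnd)
      _ ≤ (4 * (1 + L)) ^ d * ρ ^ α n :=
        le_mul_of_one_le_left (by positivity) (one_le_pow₀ (by linarith))
      _ ≤ ρ ^ α (n + 1) := (hgap n hn hnd).le

theorem mem_Xi1_span_singleton (hθ : θ ≠ 0) (hx : x ∈ layer ρ (α 1) θ) :
    x ∈ Xi1 ρ α (span ℝ {θ}) := by
  change ‖(span ℝ {θ}).starProjection x‖ < ρ ^ α (finrank ℝ (span ℝ {θ}))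
  rw [finrank_span_singleton hθ, norm_starProjection_span_singleton,
    div_lt_iff₀ (norm_pos_iff.2 hθ)]
  exact hx.resolve_left hθ

theorem mem_Xi1_sup_span_singleton (hρ : 0 ≤ ρ) (hΘ : IsAngleBound Θ L)
    (hgap : ∀ n, 1 ≤ n → n < d → (4 * (1 + L)) ^ d * ρ ^ α n < ρ ^ α (n + 1))
    (hV : IsSpannedBy Θ V) (hζ : ζ ∈ Xi1 ρ α V) (hζy : ResCongr ρ (α 1) (Θ ∩ V) ζ y)
    (hθ : θ ∈ Θ) (hθV : θ ∉ V) (hy : y ∈ layer ρ (α 1) θ) : ζ ∈ Xi1 ρ α (V ⊔ span ℝ {θ}) := by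
  rcases eq_or_ne V ⊥ with rfl | hV_ne
  · have hζy_eq : ζ = y := by
      simpa only [hV.span_inter, mem_bot, sub_eq_zero] using hζy.sub_mem_span
    rw [bot_sup_eq, hζy_eq]
    exact mem_Xi1_span_singleton (fun h ↦ hθV (h ▸ zero_mem _)) hy
  set n := finrank ℝ V
  have hL := hΘ.nonneg
  have hK : 1 ≤ 4 * (1 + L) := by linarith
  have hfinrank : finrank ℝ ↥(V ⊔ span ℝ {θ}) = n + 1 := finrank_sup_span_singleton hθV
  have hn : 1 ≤ n := one_le_finrank_iff.2 hV_ne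
  have hnd : n + 1 ≤ d := by
    simpa only [hfinrank, finrank_euclideanSpace_fin] using (V ⊔ span ℝ {θ}).finrank_le
  have hα : ρ ^ α 1 ≤ ρ ^ α n := rpow_one_le_rpow_of_gap hρ hL hgap hn (by omega)
  set M := (4 * (1 + L)) ^ n * ρ ^ α n
  have hM : ρ ^ α n ≤ M := le_mul_of_one_le_left (by positivity) (one_le_pow₀ hK)
  have hdist : ‖ζ - y‖ ≤ 2 * M := by
    have hdiam := hζy.norm_sub_le hρ (hΘ.mono inter_subset_left)
    rw [hV.span_inter] at hdiam
    exact hdiam.trans (by simp only [M]; gcongr)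
  change ‖(V ⊔ span ℝ {θ}).starProjection ζ‖ < ρ ^ α (finrank ℝ ↥(V ⊔ span ℝ {θ}))
  rw [hfinrank]
  calc ‖(V ⊔ span ℝ {θ}).starProjection ζ‖ ≤ 4 * (1 + L) * M :=
        norm_starProjection_sup_span_singleton_le_of_mem_layer hΘ hV hθ hθV hy (hα.trans hM)
          (hζ.le.trans hM) hdist
    _ = (4 * (1 + L)) ^ (n + 1) * ρ ^ α n := by rw [pow_succ', ← mul_assoc]
    _ ≤ (4 * (1 + L)) ^ d * ρ ^ α n := by gcongr
    _ < ρ ^ α (n + 1) := hgap n hn (by omega)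

theorem resCongr_inter_of_mem_Xi (hρ : 0 ≤ ρ) (hΘ : IsAngleBound (Theta0 B r) L)
    (hgap : ∀ n, 1 ≤ n → n < d → (4 * (1 + L)) ^ d * ρ ^ α n < ρ ^ α (n + 1))
    (hV : IsLatticeSubspace B r V) (hx : x ∈ Xi B ρ r α V)
    (hxy : ResCongr ρ (α 1) (Theta0 B r) x y) : ResCongr ρ (α 1) (Theta0 B r ∩ V) x y := by
  obtain ⟨⟨ζ, hζ, hζx⟩, hx_notMem⟩ := hx
  have hinter {w} (hζw : ResCongr ρ (α 1) (Theta0 B r) ζ w) :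
      ResCongr ρ (α 1) (Theta0 B r ∩ V) ζ w := by
    by_contra hζw_not
    obtain ⟨y, hζy, θ, hθ, hθV, hy⟩ := hζw.exists_mem_layer_notMem hζw_not
    have hmem : ζ ∈ Xi1 ρ α (V ⊔ span ℝ {θ}) :=
      mem_Xi1_sup_span_singleton hρ hΘ hgap hV hζ hζy hθ hθV hy
    refine hx_notMem (mem_biUnion (x := V ⊔ span ℝ {θ}) ⟨?_, ?_⟩ ⟨ζ, hmem, hζx⟩)
    · exact IsSpannedBy.sup_span_singleton hV hθ
    · rw [finrank_sup_span_singleton hθV]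
      exact Nat.lt_succ_self _
  exact (hinter hζx).symm.trans (hinter (hζx.trans hxy))

theorem resN_subset_of_projV_eq {a : ℝ}
    (hx : ∀ y, ResCongr ρ a (Theta0 B r) x y → ResCongr ρ a (Theta0 B r ∩ V) x y)
    (h : projV V x = projV V x') : resN B ρ a r x ⊆ resN B ρ a r x' := by
  intro m hm
  have horth : x' - x ∈ Vᗮ := by
    rw [← starProjection_apply_eq_zero_iff, map_sub, sub_eq_zero]
    exact h.symm
  have hshift : ResCongr ρ a (Theta0 B r ∩ V) (x + (x' - x)) (x + m + (x' - x)) :=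
    (hx _ hm).add_right fun θ hθ ↦ inner_left_of_mem_orthogonal hθ.2 horth
  rw [add_sub_cancel, add_right_comm, add_sub_cancel] at hshift
  exact hshift.mono inter_subset_left

end Xi

section Asymptotics

open Filter

theorem eventually_mul_rpow_lt_rpow {s t : ℝ} (hst : s < t) (c : ℝ) :
    ∀ᶠ ρ : ℝ in atTop, c * ρ ^ s < ρ ^ t := by
  filter_upwards [(tendsto_rpow_atTop (sub_pos.2 hst)).eventually_gt_atTop c,
    eventually_gt_atTop 0] with ρ hc hρ
  calc c * ρ ^ s < ρ ^ (t - s) * ρ ^ s := by gcongr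
    _ = ρ ^ t := by rw [← Real.rpow_add hρ, sub_add_cancel]

theorem eventually_gap {C κ : ℝ} {α : ℕ → ℝ} (hC : 0 ≤ C) (hκ : 0 ≤ κ)
    (hα : ∀ n, 1 ≤ n → n < d → α n + κ * d ^ 2 < α (n + 1)) :
    ∀ᶠ ρ : ℝ in atTop, ∀ n, 1 ≤ n → n < d →
      (4 * (1 + C * (ρ ^ κ) ^ d)) ^ d * ρ ^ α n < ρ ^ α (n + 1) := by
  have hlt : ∀ᶠ ρ : ℝ in atTop, ∀ n ∈ Finset.Ico 1 d,
      (4 * (1 + C)) ^ d * ρ ^ (α n + κ * d ^ 2) < ρ ^ α (n + 1) := by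
    rw [eventually_all_finset]
    intro n hn
    obtain ⟨hn1, hnd⟩ := Finset.mem_Ico.1 hn
    exact eventually_mul_rpow_lt_rpow (hα n hn1 hnd) _
  filter_upwards [hlt, eventually_ge_atTop 1] with ρ hlt hρ n hn1 hnd
  have hone : 1 ≤ (ρ ^ κ) ^ d := one_le_pow₀ (Real.one_le_rpow hρ hκ)
  have hbase : 4 * (1 + C * (ρ ^ κ) ^ d) ≤ 4 * (1 + C) * (ρ ^ κ) ^ d := by linarith
  calc (4 * (1 + C * (ρ ^ κ) ^ d)) ^ d * ρ ^ α n
      ≤ (4 * (1 + C) * (ρ ^ κ) ^ d) ^ d * ρ ^ α n := by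
        gcongr
    _ = (4 * (1 + C)) ^ d * ρ ^ (α n + κ * d ^ 2) := by
        rw [mul_pow, ← pow_mul, ← sq, ← Real.rpow_mul_natCast (by linarith),
          Real.rpow_add (by linarith), Nat.cast_pow]
        ring
    _ < ρ ^ α (n + 1) := hlt n (Finset.mem_Ico.2 ⟨hn1, hnd⟩)

end Asymptotics

theorem resN_depends_only_on_projV_general
    (B : Basis (Fin d) ℝ (EuclideanSpace ℝ (Fin d))) {κ : ℝ} (hκ : 0 ≤ κ) {α : ℕ → ℝ}
    (hα : ∀ n, 1 ≤ n → n < d → α n + κ * d ^ 2 < α (n + 1)) :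
    ∃ ρ₀ : ℝ, ∀ ρ r : ℝ, ρ₀ ≤ ρ → r ≤ ρ ^ κ →
      ∀ V : Submodule ℝ (EuclideanSpace ℝ (Fin d)), IsLatticeSubspace B r V →
        ∀ ξ ∈ Xi B ρ r α V, ∀ ξ' ∈ Xi B ρ r α V, projV V ξ = projV V ξ' →
          resN B ρ (α 1) r ξ = resN B ρ (α 1) r ξ' := by
  obtain ⟨C, hC, hangle⟩ := exists_isAngleBound_Theta0 B
  obtain ⟨ρ₀, hρ₀⟩ := Filter.eventually_atTop.1
    ((eventually_gap hC hκ hα).and (Filter.eventually_ge_atTop 1))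
  refine ⟨ρ₀, fun ρ r hρ hr V hV ξ hξ ξ' hξ' h ↦ ?_⟩
  obtain ⟨hgap, hρ_one⟩ := hρ₀ ρ hρ
  have hΘ : IsAngleBound (Theta0 B r) (C * (ρ ^ κ) ^ d) :=
    hangle (ρ ^ κ) (Real.one_le_rpow hρ_one hκ) r hr
  have hinter (η) (hη : η ∈ Xi B ρ r α V) (y) :
      ResCongr ρ (α 1) (Theta0 B r) η y → ResCongr ρ (α 1) (Theta0 B r ∩ V) η y :=
    resCongr_inter_of_mem_Xi (by linarith) hΘ hgap hV hη
  exact (resN_subset_of_projV_eq (hinter ξ hξ) h).antisymm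
    (resN_subset_of_projV_eq (hinter ξ' hξ') h.symm)

/-- Lemma 7.1: for sufficiently large ρ, if ξ ∈ Ξ(V), ν ∈ V^⊥ and
ξ + ν ∈ Ξ(V), then N(ξ) = N(ξ + ν); consequently, on Ξ(V) the set N(ξ) depends only
on the projection ξ_V. -/
theorem resN_depends_only_on_projV
    (d : ℕ) (hd : 2 ≤ d) (B : Basis (Fin d) ℝ (EuclideanSpace ℝ (Fin d)))
    (κ : ℝ) (α : ℕ → ℝ) :
    ∃ ρ₀ : ℝ, ∀ ρ r : ℝ, ρ₀ ≤ ρ → GoodParams B ρ r κ α →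
      ∀ V : Submodule ℝ (EuclideanSpace ℝ (Fin d)), IsLatticeSubspace B r V →
        (∀ ξ ∈ Xi B ρ r α V, ∀ ν ∈ Vᗮ, ξ + ν ∈ Xi B ρ r α V →
          resN B ρ (α 1) r ξ = resN B ρ (α 1) r (ξ + ν)) ∧
        (∀ ξ ∈ Xi B ρ r α V, ∀ ξ' ∈ Xi B ρ r α V, projV V ξ = projV V ξ' →
          resN B ρ (α 1) r ξ = resN B ρ (α 1) r ξ') := by
  by_cases h : 0 < κ ∧ ∀ n < d, α n + 2 * κ * (d : ℝ) ^ 2 < α (n + 1)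
  · obtain ⟨hκ, hα⟩ := h
    have hα' (n : ℕ) (_ : 1 ≤ n) (hn : n < d) : α n + κ * d ^ 2 < α (n + 1) := by
      have : 0 ≤ κ * (d : ℝ) ^ 2 := by positivity
      linarith [hα n hn]
    obtain ⟨ρ₀, hρ₀⟩ := resN_depends_only_on_projV_general B hκ.le hα'
    refine ⟨ρ₀, fun ρ r hρ ⟨_, _, _, _, _, hr, _⟩ V hV ↦ ⟨?_, hρ₀ ρ r hρ hr V hV⟩⟩
    intro ξ hξ ν hν hξν
    refine hρ₀ ρ r hρ hr V hV ξ hξ (ξ + ν) hξν ?_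
    change V.starProjection ξ = V.starProjection (ξ + ν)
    rw [map_add, (starProjection_apply_eq_zero_iff V).2 hν, add_zero]
  · exact ⟨0, fun ρ r _ ⟨_, hκ, _, hα, _⟩ ↦ absurd ⟨hκ, hα⟩ h⟩
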